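/- Every 2-cocycle on the q-deformed W(2,2) algebra is cohomologous to a linear combination of β and γ: if ψ: W_q × W_q → ℂ is bilinear, skew-symmetric, and satisfies ψ(α(x),[y,z]_q) + ψ(α(y),[z,x]_q) + ψ(α(z),[x,y]_q) = 0 for all x,y,z ∈ W_q, then there exist λ, μ ∈ ℂ and a linear map f: W_q → ℂ such that ψ(x,y) = λ·β(x,y) + μ·γ(x,y) + f([x,y]_q) for all x,y ∈ W_q. -/

import Mathlib

noncomputable section

/-- The underlying space of the q-deformed W(2,2) algebra: formal ℂ-linear
combinations of the basis `{L_n, M_n : n ∈ ℤ}`. -/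
abbrev Wq : Type := (ℤ →₀ ℂ) × (ℤ →₀ ℂ)

/-- The basis vector `L_n`. -/
def Lb (n : ℤ) : Wq := (Finsupp.single n 1, 0)

/-- The basis vector `M_n`. -/
def Mb (n : ℤ) : Wq := (0, Finsupp.single n 1)

/-- The q-number `[n]_q = (q^n - q^(-n))/(q - q⁻¹)`. -/
def qnum (q : ℂ) (n : ℤ) : ℂ := (q ^ n - q ^ (-n)) / (q - q⁻¹)

/-- `⟨n⟩_q = q^n + q^(-n)`. -/
def qang (q : ℂ) (n : ℤ) : ℂ := q ^ n + q ^ (-n)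

/-- The value `[m−1]_q[m]_q[m+1]_q / ([2]_q[3]_q⟨m⟩_q)` appearing in the
2-cocycles `β` and `γ`. -/
def cocyc (q : ℂ) (m : ℤ) : ℂ :=
  qnum q (m - 1) * qnum q m * qnum q (m + 1) / (qnum q 2 * qnum q 3 * qang q m)

lemma qn_ne (q : ℂ) (hq1 : ∀ k : ℤ, 1 ≤ k → q ^ k ≠ 1) (n : ℤ) (hn : n ≠ 0) :
    q ^ n ≠ 1 := by
  rcases lt_or_gt_of_ne hn with h | h
  · intro h1
    apply hq1 (-n) (by omega)
    rw [zpow_neg, h1, inv_one]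
  · exact hq1 n (by omega)

lemma qd_ne (q : ℂ) (hq0 : q ≠ 0) (hq1 : ∀ k : ℤ, 1 ≤ k → q ^ k ≠ 1) : q - q⁻¹ ≠ 0 := by
  intro h
  apply hq1 2 (by norm_num)
  have : q = q⁻¹ := sub_eq_zero.mp h
  calc q ^ (2:ℤ) = q * q := by rw [zpow_ofNat]; ring
    _ = q * q⁻¹ := by rw [← this]
    _ = 1 := mul_inv_cancel₀ hq0

lemma qnum_ne (q : ℂ) (hq0 : q ≠ 0) (hq1 : ∀ k : ℤ, 1 ≤ k → q ^ k ≠ 1) (n : ℤ) (hn : n ≠ 0) :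
    qnum q n ≠ 0 := by
  unfold qnum
  refine div_ne_zero ?_ (qd_ne q hq0 hq1)
  intro h
  apply qn_ne q hq1 (n + n) (by omega)
  rw [zpow_add₀ hq0]
  nth_rewrite 1 [sub_eq_zero.mp h]
  rw [zpow_neg, inv_mul_cancel₀ (zpow_ne_zero _ hq0)]

lemma qang_ne (q : ℂ) (hq0 : q ≠ 0) (hq1 : ∀ k : ℤ, 1 ≤ k → q ^ k ≠ 1) (n : ℤ) :
    qang q n ≠ 0 := by
  unfold qang
  rcases eq_or_ne n 0 with rfl | hn
  · norm_num
  intro h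
  apply qn_ne q hq1 (n + n + (n + n)) (by omega)
  have hz := zpow_ne_zero n hq0
  have h2 : q ^ (n + n) = -1 := by
    rw [zpow_add₀ hq0]
    nth_rewrite 1 [eq_neg_of_add_eq_zero_left h]
    rw [zpow_neg, neg_mul, inv_mul_cancel₀ hz]
  rw [zpow_add₀ hq0, h2]; norm_num

lemma qnum_neg (q : ℂ) (n : ℤ) : qnum q (-n) = - qnum q n := by
  unfold qnum; rw [neg_neg]; ring

lemma qnum_zero (q : ℂ) : qnum q 0 = 0 := by simp [qnum]

lemma qang_neg (q : ℂ) (n : ℤ) : qang q (-n) = qang q n := by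
  unfold qang; rw [neg_neg]; ring

lemma qang_zero (q : ℂ) : qang q 0 = 2 := by norm_num [qang]

lemma qang_qnum (q : ℂ) (hq0 : q ≠ 0) (y z : ℤ) :
    qang q y * qnum q z + qang q z * qnum q y = 2 * qnum q (y + z) := by
  unfold qang qnum
  rw [neg_add, zpow_add₀ hq0, zpow_add₀ hq0]
  ring

lemma qS (q : ℂ) (hq0 : q ≠ 0) (x : ℤ) :
    qang q x * qnum q (2 * x) * qnum q (x + 2) = qang q 1 * qnum q 2 * qnum q (2 * x + 1)
      + qang q (x + 1) * qnum q (2 * (x + 1)) * qnum q (x - 1) := by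
  unfold qang qnum
  have hx := zpow_ne_zero x hq0
  rw [show 2 * x = x + x by ring, show 2 * (x + 1) = x + 1 + (x + 1) by ring]
  simp only [sub_eq_add_neg, neg_add, neg_neg, zpow_add₀ hq0, zpow_neg, zpow_one,
    show (2:ℤ) = 1 + 1 from rfl]
  generalize (q + -q⁻¹) = d
  field_simp
  ring

/-- The core one-variable recursion. -/
lemma coreD (q : ℂ) (hq0 : q ≠ 0) (hq1 : ∀ k : ℤ, 1 ≤ k → q ^ k ≠ 1) (D : ℤ → ℂ)
    (hodd : ∀ x, D (-x) = - D x) (h1 : D 1 = 0)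
    (hrec : ∀ x, D x * qnum q (x + 2) = D (x + 1) * qnum q (x - 1)) (x : ℤ) :
    qnum q 2 * qnum q 3 * D x = D 2 * (qnum q (x - 1) * qnum q x * qnum q (x + 1)) := by
  have hone : qnum q 1 = 1 := by
    unfold qnum; rw [zpow_neg, zpow_one]; exact div_self (qd_ne q hq0 hq1)
  have h0 : D 0 = 0 := by
    have := hodd 0
    rw [neg_zero] at this
    linear_combination this / 2
  have hge : ∀ x : ℤ, 2 ≤ x →
      qnum q 2 * qnum q 3 * D x = D 2 * (qnum q (x - 1) * qnum q x * qnum q (x + 1)) := by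
    intro x hx
    induction x, hx using Int.leInduction with
    | base => norm_num [hone]; ring
    | succ n hn ih =>
      have hne := qnum_ne q hq0 hq1 (n - 1) (by omega)
      apply mul_right_cancel₀ hne
      rw [add_sub_cancel_right, show n + 1 + 1 = n + 2 by ring]
      linear_combination (-(qnum q 2 * qnum q 3)) * hrec n + qnum q (n + 2) * ih
  have hnn : ∀ x : ℤ, 0 ≤ x →
      qnum q 2 * qnum q 3 * D x = D 2 * (qnum q (x - 1) * qnum q x * qnum q (x + 1)) := by
    intro x hx
    rcases (show x = 0 ∨ x = 1 ∨ 2 ≤ x by omega) with rfl | rfl | h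
    · simp [h0, qnum_zero]
    · simp [h1, qnum_zero]
    · exact hge x h
  rcases le_total 0 x with h | h
  · exact hnn x h
  · have := hnn (-x) (by omega)
    rw [hodd, qnum_neg, show -x - 1 = -(x + 1) by ring, show -x + 1 = -(x - 1) by ring, qnum_neg,
      qnum_neg] at this
    linear_combination -this

/-- Classification of the functions satisfying the cocycle equation on (L, L, M). -/
lemma core (q : ℂ) (hq0 : q ≠ 0) (hq1 : ∀ k : ℤ, 1 ≤ k → q ^ k ≠ 1) (b : ℤ → ℤ → ℂ)
    (hb : ∀ x y z : ℤ, qang q x * qnum q (z - y) * b x (y + z)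
      + qang q y * qnum q (x - z) * b y (x + z) - qang q z * qnum q (y - x) * b (x + y) z = 0) :
    ∃ (lam : ℂ) (g : ℤ → ℂ), ∀ m n : ℤ,
      b m n = lam * (if m = -n then cocyc q m else 0) + qnum q (n - m) * g (m + n) := by
  have hA : ∀ y z : ℤ, qnum q (y + z) * b y z = qnum q (z - y) * b 0 (y + z) := by
    intro y z
    have h := hb 0 y z
    rw [qang_zero, zero_sub, sub_zero, zero_add, zero_add, qnum_neg] at h
    have h2 := qang_qnum q hq0 y z
    linear_combination (-b y z / 2) * h2 - h / 2
  have h00 : b 0 0 = 0 := by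
    have h := hA (-1) 1
    rw [show (-1 : ℤ) + 1 = 0 by norm_num, qnum_zero, zero_mul] at h
    exact (mul_eq_zero.mp h.symm).resolve_left (qnum_ne q hq0 hq1 _ (by norm_num))
  have h2 := qnum_ne q hq0 hq1 2 (by norm_num)
  have h3 := qnum_ne q hq0 hq1 3 (by norm_num)
  set G : ℂ := - b 1 (-1) / qnum q 2 with hG
  have hG' : qnum q 2 * G = - b 1 (-1) := by rw [hG]; field_simp
  set D : ℤ → ℂ := fun x => qang q x * (b x (-x) + qnum q (2 * x) * G) with hD
  have hbodd : ∀ x : ℤ, b (-x) x = - b x (-x) := by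
    intro x
    rcases eq_or_ne x 0 with rfl | hx
    · simp [h00]
    have h := hb x (-x) 0
    rw [add_neg_cancel, h00, add_zero, add_zero, zero_sub, neg_neg, sub_zero, qang_neg] at h
    have hne := mul_ne_zero (qang_ne q hq0 hq1 x) (qnum_ne q hq0 hq1 x hx)
    apply mul_left_cancel₀ hne
    linear_combination h
  have hodd : ∀ x, D (-x) = - D x := by
    intro x
    simp only [hD]
    rw [qang_neg, neg_neg, hbodd, mul_neg, qnum_neg]
    ring
  have hD1 : D 1 = 0 := by
    simp only [hD]
    rw [mul_one, hG']; ring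
  have hrec : ∀ x, D x * qnum q (x + 2) = D (x + 1) * qnum q (x - 1) := by
    intro x
    simp only [hD]
    have h := hb x 1 (-(x + 1))
    rw [qang_neg, show -(x + 1) - 1 = -(x + 2) by ring, show 1 + -(x + 1) = -x by ring,
      show x - -(x + 1) = 2 * x + 1 by ring, show x + -(x + 1) = -1 by ring,
      show 1 - x = -(x - 1) by ring, qnum_neg, qnum_neg] at h
    have hs := qS q hq0 x
    linear_combination (-1) * h + G * hs + qang q 1 * qnum q (2 * x + 1) * hG'
  have hcore := coreD q hq0 hq1 D hodd hD1 hrec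
  refine ⟨D 2, fun n => if n = 0 then G else b 0 n / qnum q n, ?_⟩
  intro m n
  by_cases hmn : m = -n
  · obtain rfl : n = -m := by omega
    have hc := hcore m
    have hm := qang_ne q hq0 hq1 m
    rw [if_pos hmn, add_neg_cancel]
    simp only [if_true]
    rw [show -m - m = -(2 * m) by ring, qnum_neg]
    unfold cocyc
    have : D m = qang q m * (b m (-m) + qnum q (2 * m) * G) := rfl
    rw [this] at hc
    generalize D 2 = d at hc
    field_simp
    linear_combination hc
  · have hne : m + n ≠ 0 := by omega
    have hq := qnum_ne q hq0 hq1 _ hne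
    simp only [if_neg hmn, if_neg hne]
    have h := hA m n
    field_simp
    linear_combination h

lemma bil_ext (φ χ : Wq →ₗ[ℂ] Wq →ₗ[ℂ] ℂ)
    (hLL : ∀ m n, φ (Lb m) (Lb n) = χ (Lb m) (Lb n))
    (hLM : ∀ m n, φ (Lb m) (Mb n) = χ (Lb m) (Mb n))
    (hML : ∀ m n, φ (Mb m) (Lb n) = χ (Mb m) (Lb n))
    (hMM : ∀ m n, φ (Mb m) (Mb n) = χ (Mb m) (Mb n)) : φ = χ := by
  apply LinearMap.prod_ext <;> refine Finsupp.lhom_ext' fun m => LinearMap.ext_ring ?_ <;>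
    apply LinearMap.prod_ext <;> refine Finsupp.lhom_ext' fun n => LinearMap.ext_ring ?_
  · exact hLL m n
  · exact hLM m n
  · exact hML m n
  · exact hMM m n

/-- Every 2-cocycle on the q-deformed W(2,2) algebra is cohomologous to a
linear combination of `β` and `γ`. -/
theorem cocycle_eq_combination_up_to_coboundary (q : ℂ) (hq0 : q ≠ 0)
    (hq1 : ∀ k : ℤ, 1 ≤ k → q ^ k ≠ 1)
    (br : Wq →ₗ[ℂ] Wq →ₗ[ℂ] Wq) (α : Wq →ₗ[ℂ] Wq)
    (hLL : ∀ n m : ℤ, br (Lb n) (Lb m) = qnum q (m - n) • Lb (m + n))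
    (hLM : ∀ n m : ℤ, br (Lb n) (Mb m) = qnum q (m - n) • Mb (m + n))
    (hML : ∀ m n : ℤ, br (Mb m) (Lb n) = qnum q (n - m) • Mb (m + n))
    (hMM : ∀ n m : ℤ, br (Mb n) (Mb m) = 0)
    (hαL : ∀ n : ℤ, α (Lb n) = qang q n • Lb n)
    (hαM : ∀ n : ℤ, α (Mb n) = qang q n • Mb n)
    (β γ : Wq →ₗ[ℂ] Wq →ₗ[ℂ] ℂ)
    (hβLL : ∀ m n : ℤ, β (Lb m) (Lb n) = if m = -n then cocyc q m else 0)
    (hβLM : ∀ m n : ℤ, β (Lb m) (Mb n) = 0)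
    (hβML : ∀ m n : ℤ, β (Mb m) (Lb n) = 0)
    (hβMM : ∀ m n : ℤ, β (Mb m) (Mb n) = 0)
    (hγLM : ∀ m n : ℤ, γ (Lb m) (Mb n) = if m = -n then cocyc q m else 0)
    (hγML : ∀ m n : ℤ, γ (Mb m) (Lb n) = if m = -n then -cocyc q n else 0)
    (hγLL : ∀ m n : ℤ, γ (Lb m) (Lb n) = 0)
    (hγMM : ∀ m n : ℤ, γ (Mb m) (Mb n) = 0)
    (ψ : Wq →ₗ[ℂ] Wq →ₗ[ℂ] ℂ)
    (hψskew : ∀ x y : Wq, ψ x y = - ψ y x)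
    (hψcocy : ∀ x y z : Wq,
      ψ (α x) (br y z) + ψ (α y) (br z x) + ψ (α z) (br x y) = 0) :
    ∃ (lam mu : ℂ) (f : Wq →ₗ[ℂ] ℂ),
      ∀ x y : Wq, ψ x y = lam * β x y + mu * γ x y + f (br x y) := by
  have smul2 : ∀ (a c : ℂ) (x y : Wq), ψ (a • x) (c • y) = a * c * ψ x y := by
    intro a c x y
    simp only [map_smul, LinearMap.smul_apply, smul_eq_mul]; ring
  obtain ⟨lam, g, hg⟩ := core q hq0 hq1 (fun m n => ψ (Lb m) (Lb n)) (by
    intro x y z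
    have h := hψcocy (Lb x) (Lb y) (Lb z)
    simp only [hLL, hαL, smul2] at h
    rw [hψskew (Lb z) (Lb (y + x)), add_comm z y, add_comm y x] at h
    linear_combination h)
  obtain ⟨mu, k, hk⟩ := core q hq0 hq1 (fun m n => ψ (Lb m) (Mb n)) (by
    intro x y z
    have h := hψcocy (Lb x) (Lb y) (Mb z)
    simp only [hLL, hLM, hML, hαL, hαM, smul2] at h
    rw [hψskew (Mb z) (Lb (y + x)), add_comm z y, add_comm z x, add_comm y x] at h
    linear_combination h)
  have hE : ∀ x y z : ℤ, qang q y * qnum q (x - z) * ψ (Mb y) (Mb (x + z))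
      + qang q z * qnum q (y - x) * ψ (Mb z) (Mb (x + y)) = 0 := by
    intro x y z
    have h := hψcocy (Lb x) (Mb y) (Mb z)
    simp only [hMM, hLM, hML, hαL, hαM, smul2, map_zero] at h
    rw [add_comm z x, add_comm y x] at h
    linear_combination h
  have hMM0 : ∀ m n : ℤ, ψ (Mb m) (Mb n) = 0 := by
    intro m n
    by_cases hmn : m + n = 0
    · obtain rfl : n = -m := by omega
      have hsk : ψ (Mb 0) (Mb 0) = 0 := by
        have := hψskew (Mb 0) (Mb 0)
        linear_combination this / 2
      rcases eq_or_ne m 0 with rfl | hm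
      · simpa using hsk
      · have h := hE (-m) m 0
        rw [neg_add_cancel, hsk, add_zero, sub_zero, mul_zero, add_zero] at h
        exact (mul_eq_zero.mp h).resolve_left (mul_ne_zero (qang_ne q hq0 hq1 m)
          (qnum_ne q hq0 hq1 _ (by omega)))
    · have h := hE 0 m n
      rw [zero_add, zero_add, zero_sub, sub_zero, qnum_neg, hψskew (Mb n) (Mb m)] at h
      have h2 := qang_qnum q hq0 m n
      apply (mul_eq_zero.mp (?_ : qnum q (m + n) * ψ (Mb m) (Mb n) = 0)).resolve_left
        (qnum_ne q hq0 hq1 _ hmn)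
      linear_combination (-1 / 2) * h - ψ (Mb m) (Mb n) / 2 * h2
  let f : Wq →ₗ[ℂ] ℂ := (Finsupp.linearCombination ℂ g).coprod (Finsupp.linearCombination ℂ k)
  have hfL : ∀ n, f (Lb n) = g n := by intro n; simp [f, Lb]
  have hfM : ∀ n, f (Mb n) = k n := by intro n; simp [f, Mb]
  refine ⟨lam, mu, f, ?_⟩
  have key : ψ = lam • β + mu • γ + br.compr₂ f := by
    apply bil_ext
    · intro m n
      have := hg m n
      simp only [LinearMap.add_apply, LinearMap.smul_apply, LinearMap.compr₂_apply, hLL, hβLL, hγLL,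
        map_smul, smul_eq_mul, hfL]
      rw [this, add_comm n m]; ring
    · intro m n
      have := hk m n
      simp only [LinearMap.add_apply, LinearMap.smul_apply, LinearMap.compr₂_apply, hLM, hβLM, hγLM,
        map_smul, smul_eq_mul, hfM]
      rw [this, add_comm n m]; ring
    · intro m n
      have := hk n m
      simp only [LinearMap.add_apply, LinearMap.smul_apply, LinearMap.compr₂_apply, hML, hβML, hγML,
        map_smul, smul_eq_mul, hfM]
      rw [hψskew, this, add_comm n m, show n - m = -(m - n) by ring, qnum_neg]
      by_cases h : m = -n
      · rw [if_pos h, if_pos (by omega)]; ring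
      · rw [if_neg h, if_neg (by omega)]; ring
    · intro m n
      simp only [LinearMap.add_apply, LinearMap.smul_apply, LinearMap.compr₂_apply, hMM, hβMM, hγMM,
        map_zero, smul_eq_mul, hMM0]
      ring
  intro x y
  have := congrArg (fun φ : Wq →ₗ[ℂ] Wq →ₗ[ℂ] ℂ => φ x y) key
  simpa using this
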